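/- arXiv:1310.4035 — 5 statements merged into one kernel-verified Lean document; each statement's English description precedes it below -/
import Mathlib

section
/- Let 𝒟 be a class of compact Hausdorff spaces such that: (a) every closed subspace of a member of 𝒟 belongs to 𝒟; (b) every Hausdorff continuous image (equivalently, Hausdorff quotient) of a member of 𝒟 belongs to 𝒟; and (c) every member of 𝒟 whose topology is the order topology of some linear order on it is metrizable. Then every member of 𝒟 has the Bishop property (B). -/
open Set Topology Filter

/-- `f ≺ g`: `f ≠ g` and `f` agrees with `g` on the support of `f` (the closure of
the set where `f` is nonzero). -/
def Prec {K : Type*} [TopologicalSpace K] (f g : C(K, ℝ)) : Prop :=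
  f ≠ g ∧ ∀ t ∈ closure {t | f t ≠ 0}, f t = g t

/-- `f ≺_δ g`: `f ≺ g` and `‖f - g‖ ≥ δ`. -/
def PrecDelta {K : Type*} [TopologicalSpace K] [CompactSpace K] (δ : ℝ) (f g : C(K, ℝ)) : Prop :=
  Prec f g ∧ δ ≤ ‖f - g‖

/-- `F` is a `δ`-`≺`-chain. -/
def IsPrecChain {K : Type*} [TopologicalSpace K] [CompactSpace K] (δ : ℝ)
    (F : Set C(K, ℝ)) : Prop :=
  ∀ f ∈ F, ∀ g ∈ F, f ≠ g → PrecDelta δ f g ∨ PrecDelta δ g f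

/-- A compact Hausdorff space has the Bishop property (B) if for every `δ > 0`
every `δ`-`≺`-chain in `C(K)` is countable. -/
def HasBishop (K : Type*) [TopologicalSpace K] [CompactSpace K] [T2Space K] : Prop :=
  ∀ δ : ℝ, 0 < δ → ∀ F : Set C(K, ℝ), IsPrecChain δ F → F.Countable

/-- A compact topology on a linear order in which all open rays are open is the order topology. -/
theorem orderTopology_of_isOpen_rays {X : Type*} [TopologicalSpace X] [CompactSpace X]
    [LinearOrder X] (hIio : ∀ a : X, IsOpen (Iio a)) (hIoi : ∀ a : X, IsOpen (Ioi a)) :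
    OrderTopology X := by
  have hle : ‹TopologicalSpace X› ≤ Preorder.topology X := by
    refine le_generateFrom ?_
    rintro s ⟨a, rfl | rfl⟩
    exacts [hIoi a, hIio a]
  have ht2 : @T2Space X (Preorder.topology X) := by
    let := Preorder.topology X
    have : OrderTopology X := ⟨rfl⟩
    infer_instance
  have hclosed : @IsClosedMap X X _ (Preorder.topology X) id :=
    @Continuous.isClosedMap X X _ (Preorder.topology X) _ ht2 id (continuous_id_of_le hle)
  refine ⟨le_antisymm hle fun s hs => ?_⟩
  have h := hclosed sᶜ hs.isClosed_compl
  rw [image_id] at h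
  exact (@isClosed_compl_iff X (Preorder.topology X) s).1 h

/-- A compact set of `Bool`-valued functions which is totally ordered pointwise carries the order
topology. -/
theorem exists_linearOrder_orderTopology_of_isChain {ι : Type*} {S : Set (ι → Bool)}
    (hS : IsCompact S) (hchain : ∀ x ∈ S, ∀ y ∈ S, x ≤ y ∨ y ≤ x) :
    ∃ l : LinearOrder S, @OrderTopology S _ l.toPreorder := by
  classical
  have : CompactSpace S := isCompact_iff_compactSpace.1 hS
  let l : LinearOrder S :=
    { (inferInstance : PartialOrder S) with
      le_total := fun x y => hchain x x.2 y y.2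
      toDecidableLE := Classical.decRel _ }
  have hlt (x y : S) : x < y ↔ ∃ i, x.1 i = false ∧ y.1 i = true := by
    rw [← not_le, ← Subtype.coe_le_coe, Pi.le_def]
    simp only [not_forall, not_le, Bool.lt_iff]
  have hopen (i : ι) (b : Bool) : IsOpen {x : S | x.1 i = b} :=
    (isOpen_discrete ({b} : Set Bool)).preimage
      (f := fun x : S => x.1 i) ((continuous_apply i).comp continuous_subtype_val)
  refine ⟨l, orderTopology_of_isOpen_rays (fun a => ?_) fun a => ?_⟩
  · have : Iio a = ⋃ (i) (_ : a.1 i = true), {x : S | x.1 i = false} := by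
      ext x
      simp [hlt, and_comm]
    rw [this]
    exact isOpen_iUnion fun i => isOpen_iUnion fun _ => hopen i false
  · have : Ioi a = ⋃ (i) (_ : a.1 i = false), {x : S | x.1 i = true} := by
      ext x
      simp [hlt]
    rw [this]
    exact isOpen_iUnion fun i => isOpen_iUnion fun _ => hopen i true

theorem Prec.apply_eq {K : Type*} [TopologicalSpace K] {f g : C(K, ℝ)} (h : Prec f g) {t : K}
    (ht : f t ≠ 0) : f t = g t :=
  h.2 t (subset_closure ht)

section GapSet

variable {K : Type*} [TopologicalSpace K]

/-- The points at which each function in `F` either vanishes or has absolute value at least `δ`. -/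
def gapSet (δ : ℝ) (F : Set C(K, ℝ)) : Set K :=
  {t | ∀ f ∈ F, f t = 0 ∨ δ ≤ |f t|}

theorem isClosed_gapSet (δ : ℝ) (F : Set C(K, ℝ)) : IsClosed (gapSet δ F) := by
  simp only [gapSet, ofPred_forall]
  refine isClosed_iInter fun f => isClosed_iInter fun _ => ?_
  exact (isClosed_eq f.continuous continuous_const).union
    (isClosed_le continuous_const f.continuous.abs)

open Classical in
/-- The map sending a point of `gapSet δ F` to the indicator of the functions in `F` that do not
vanish there. -/
noncomputable def gapMap (δ : ℝ) (F : Set C(K, ℝ)) (t : gapSet δ F) (f : F) : Bool :=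
  decide (f.1 t ≠ 0)

theorem gapMap_eq_true {δ : ℝ} {F : Set C(K, ℝ)} {t : gapSet δ F} {f : F} :
    gapMap δ F t f = true ↔ f.1 t ≠ 0 := by
  simp [gapMap]

theorem continuous_gapMap {δ : ℝ} (hδ : 0 < δ) (F : Set C(K, ℝ)) : Continuous (gapMap δ F) := by
  refine continuous_pi fun f => continuous_bool_rng true |>.2 ⟨?_, ?_⟩
  · have : (fun t => gapMap δ F t f) ⁻¹' {true} = {t : gapSet δ F | δ ≤ |f.1 t|} := by
      ext t
      simp only [mem_preimage, mem_singleton_iff, gapMap_eq_true, mem_ofPred_eq]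
      refine ⟨(t.2 f f.2).resolve_left, fun h h0 => ?_⟩
      rw [h0, abs_zero] at h
      exact hδ.not_ge h
    rw [this]
    exact isClosed_le continuous_const (f.1.continuous.comp continuous_subtype_val).abs
  · have : (fun t => gapMap δ F t f) ⁻¹' {true} = {t : gapSet δ F | f.1 t ≠ 0} := by
      ext t
      simp [gapMap_eq_true]
    rw [this]
    exact isOpen_ne_fun (f.1.continuous.comp continuous_subtype_val) continuous_const

variable [CompactSpace K] {δ : ℝ} {F : Set C(K, ℝ)}

theorem IsPrecChain.gapMap_le_total (hF : IsPrecChain δ F) (s t : gapSet δ F) :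
    gapMap δ F s ≤ gapMap δ F t ∨ gapMap δ F t ≤ gapMap δ F s := by
  by_contra h
  simp only [not_or, Pi.le_def, not_forall, not_le, Bool.lt_iff, ← Bool.not_eq_true,
    gapMap_eq_true, not_not] at h
  obtain ⟨⟨f, hft, hfs⟩, g, hgs, hgt⟩ := h
  have hne : f.1 ≠ g.1 := fun h => hfs (h ▸ hgs)
  rcases hF f f.2 g g.2 hne with h | h
  · exact hfs ((h.1.apply_eq hfs).trans hgs)
  · exact hgt ((h.1.apply_eq hgt).trans hft)

theorem IsPrecChain.exists_gapSet (hF : IsPrecChain δ F) (hδ : 0 < δ) {f g : C(K, ℝ)}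
    (hg : g ∈ F) (hfg : PrecDelta δ f g) : ∃ t ∈ gapSet δ F, f t = 0 ∧ g t ≠ 0 := by
  obtain ⟨t, ht⟩ : ∃ t, δ ≤ |f t - g t| := by
    by_contra! h
    exact ((ContinuousMap.norm_lt_iff (f - g) hδ).2 h).not_ge hfg.2
  have hft : f t = 0 := by
    by_contra h
    rw [hfg.1.apply_eq h, sub_self, abs_zero] at ht
    exact hδ.not_ge ht
  rw [hft, zero_sub, abs_neg] at ht
  have hgt : g t ≠ 0 := fun h => hδ.not_ge (by rwa [h, abs_zero] at ht)
  refine ⟨t, fun h hh => or_iff_not_imp_left.2 fun hht => ?_, hft, hgt⟩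
  suffices h t = g t by rwa [this]
  rcases eq_or_ne h g with rfl | hne
  · rfl
  rcases hF h hh g hg hne with H | H
  · exact H.1.apply_eq hht
  · exact (H.1.apply_eq hgt).symm

/-- If the image of `gapMap δ F` is second countable, then the `δ`-`≺`-chain `F` is countable. -/
theorem IsPrecChain.countable_of_secondCountable (hF : IsPrecChain δ F) (hδ : 0 < δ)
    [CompactSpace (range (gapMap δ F))] [SecondCountableTopology (range (gapMap δ F))] :
    F.Countable := by
  have hcount : Countable (TopologicalSpace.Clopens (range (gapMap δ F))) :=
    TopologicalSpace.Clopens.countable_iff_secondCountable.2 inferInstance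
  let U (f : F) : TopologicalSpace.Clopens (range (gapMap δ F)) :=
    ⟨{x | x.1 f = true}, (isClopen_discrete {true}).preimage
      ((continuous_apply f).comp continuous_subtype_val)⟩
  have hU {f g : F} (hfg : PrecDelta δ f.1 g.1) : U f ≠ U g := fun h => by
    obtain ⟨t, ht, hft, hgt⟩ := hF.exists_gapSet hδ g.2 hfg
    have hmem : (⟨gapMap δ F ⟨t, ht⟩, mem_range_self _⟩ : range (gapMap δ F)) ∈ U f :=
      h ▸ (gapMap_eq_true.2 hgt)
    exact gapMap_eq_true.1 hmem hft
  have hinj : Function.Injective U := fun f g h => by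
    by_contra hne
    rcases hF f f.2 g g.2 (Subtype.coe_injective.ne hne) with H | H
    · exact hU H h
    · exact hU H h.symm
  exact countable_coe_iff.1 hinj.countable

end GapSet

/-- **Theorem 1.5.** Let `D` be a class of compact Hausdorff spaces that is preserved
when taking closed subspaces and Hausdorff continuous images (quotients), and which
contains no non-metrizable linearly ordered space (i.e. every member whose topology is
the order topology of some linear order on it is metrizable). Then every member of `D`
has the Bishop property (B). -/
theorem stmt0 {D : (X : Type u) → [TopologicalSpace X] → Prop}
    (hclosed : ∀ (X : Type u) [TopologicalSpace X] [CompactSpace X] [T2Space X],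
      D X → ∀ C : Set X, IsClosed C → D C)
    (himage : ∀ (X Y : Type u) [TopologicalSpace X] [CompactSpace X] [T2Space X]
      [TopologicalSpace Y] [CompactSpace Y] [T2Space Y],
      D X → (∃ π : X → Y, Continuous π ∧ Function.Surjective π) → D Y)
    (horder : ∀ (X : Type u) [TopologicalSpace X] [CompactSpace X] [T2Space X],
      D X → (∃ l : LinearOrder X, @OrderTopology X ‹TopologicalSpace X› l.toPreorder) →
        TopologicalSpace.MetrizableSpace X)
    (K : Type u) [TopologicalSpace K] [CompactSpace K] [T2Space K] (hK : D K) :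
    HasBishop K := by
  intro δ hδ F hF
  have hcont := continuous_gapMap hδ F
  have : CompactSpace (gapSet δ F) :=
    isCompact_iff_compactSpace.1 (isClosed_gapSet δ F).isCompact
  have hcompact : IsCompact (range (gapMap δ F)) := isCompact_range hcont
  have : CompactSpace (range (gapMap δ F)) := isCompact_iff_compactSpace.1 hcompact
  have hD : D (range (gapMap δ F)) :=
    himage (gapSet δ F) _ (hclosed K hK _ (isClosed_gapSet δ F))
      ⟨rangeFactorization (gapMap δ F), hcont.subtype_mk _, rangeFactorization_surjective⟩
  have : TopologicalSpace.MetrizableSpace (range (gapMap δ F)) := by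
    refine horder _ hD (exists_linearOrder_orderTopology_of_isChain hcompact ?_)
    rintro _ ⟨s, rfl⟩ _ ⟨t, rfl⟩
    exact hF.gapMap_le_total s t
  let := TopologicalSpace.metrizableSpaceMetric (range (gapMap δ F))
  exact hF.countable_of_secondCountable hδ
end

section
/- Let K be a compact Hausdorff space, δ > 0, and F a nonempty δ-≺-chain in C(K). For every initial segment P of F, both the union of the sets W_I over all initial segments I with I ⊆ P, and the union of the sets W_J over all initial segments J with P ⊆ J, are compact subsets of K. -/
open Set Topology Filter

/-- `I` is an initial segment of the chain `F`. -/
def IsInitialSegment {K : Type*} [TopologicalSpace K] (F I : Set C(K, ℝ)) : Prop :=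
  I ⊆ F ∧ ∀ f ∈ F, ∀ g ∈ I, Prec f g → f ∈ I

/-- The set `W_I = ⋂_{f ∈ I} f⁻¹({0}) ∩ ⋂_{g ∈ F∖I} g⁻¹({x : |x| ≥ δ})`. -/
def W {K : Type*} [TopologicalSpace K] (δ : ℝ) (F I : Set C(K, ℝ)) : Set K :=
  (⋂ f ∈ I, (f : C(K, ℝ)) ⁻¹' {0}) ∩ ⋂ g ∈ F \ I, (g : C(K, ℝ)) ⁻¹' {x : ℝ | δ ≤ |x|}

/-- The functions of `F` vanishing at a given point form an initial segment. -/
lemma isInitialSegment_vanishing {K : Type*} [TopologicalSpace K] (F : Set C(K, ℝ)) (t : K) :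
    IsInitialSegment F {f ∈ F | f t = 0} := by
  refine ⟨fun f hf => hf.1, fun f hf g hg hfg => ⟨hf, ?_⟩⟩
  by_contra h
  exact h ((hfg.2 t (subset_closure h)).trans hg.2)

lemma mem_W_iff {K : Type*} [TopologicalSpace K] {δ : ℝ} {F I : Set C(K, ℝ)} {t : K} :
    t ∈ W δ F I ↔ (∀ f ∈ I, f t = 0) ∧ ∀ f ∈ F, f ∉ I → δ ≤ |f t| := by
  simp [W]

/-- A point lies in some `W_I` with `I ⊆ P` iff each function of `F` takes there the value `0` or
a value of modulus at least `δ`, the latter being forced outside `P`. -/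
lemma iUnion_W_subset_eq {K : Type*} [TopologicalSpace K] {δ : ℝ} (hδ : 0 < δ)
    (F P : Set C(K, ℝ)) :
    (⋃ I ∈ {I | IsInitialSegment F I ∧ I ⊆ P}, W δ F I) =
      {t | (∀ f ∈ F, f t = 0 ∨ δ ≤ |f t|) ∧ ∀ f ∈ F \ P, δ ≤ |f t|} := by
  ext t
  simp only [mem_iUnion, mem_ofPred_eq, exists_prop, mem_W_iff]
  constructor
  · rintro ⟨I, ⟨-, hIP⟩, h0, h1⟩
    exact ⟨fun f hf => (em (f ∈ I)).imp (h0 f) (h1 f hf),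
      fun f hf => h1 f hf.1 fun h => hf.2 (hIP h)⟩
  · rintro ⟨h0, h1⟩
    refine ⟨_, ⟨isInitialSegment_vanishing F t, fun f hf => ?_⟩, fun f hf => hf.2,
      fun f hf hn => (h0 f hf).resolve_left fun h => hn ⟨hf, h⟩⟩
    by_contra hfP
    have := h1 f ⟨hf.1, hfP⟩
    rw [hf.2, abs_zero] at this
    exact this.not_gt hδ

/-- A point lies in some `W_J` with `P ⊆ J` iff each function of `F` takes there the value `0` or
a value of modulus at least `δ`, the former being forced on `P`. -/
lemma iUnion_W_superset_eq {K : Type*} [TopologicalSpace K] (δ : ℝ)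
    {F P : Set C(K, ℝ)} (hP : P ⊆ F) :
    (⋃ J ∈ {J | IsInitialSegment F J ∧ P ⊆ J}, W δ F J) =
      {t | (∀ f ∈ F, f t = 0 ∨ δ ≤ |f t|) ∧ ∀ f ∈ P, f t = 0} := by
  ext t
  simp only [mem_iUnion, mem_ofPred_eq, exists_prop, mem_W_iff]
  constructor
  · rintro ⟨J, ⟨-, hPJ⟩, h0, h1⟩
    exact ⟨fun f hf => (em (f ∈ J)).imp (h0 f) (h1 f hf), fun f hf => h0 f (hPJ hf)⟩
  · rintro ⟨h0, h1⟩
    exact ⟨_, ⟨isInitialSegment_vanishing F t, fun f hf => ⟨hP hf, h1 f hf⟩⟩, fun f hf => hf.2,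
      fun f hf hn => (h0 f hf).resolve_left fun h => hn ⟨hf, h⟩⟩

/-- **Proposition 2.1 (iii).** For every initial segment `P` of a nonempty
`δ`-`≺`-chain `F`, both `⋃_{I ⊆ P} W_I` and `⋃_{P ⊆ J} W_J` (unions over initial
segments) are compact. -/
theorem stmt3 {K : Type*} [TopologicalSpace K] [CompactSpace K] [T2Space K]
    (δ : ℝ) (hδ : 0 < δ) (F : Set C(K, ℝ)) (hFne : F.Nonempty) (hF : IsPrecChain δ F)
    (P : Set C(K, ℝ)) (hP : IsInitialSegment F P) :
    IsCompact (⋃ I ∈ {I | IsInitialSegment F I ∧ I ⊆ P}, W δ F I) ∧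
      IsCompact (⋃ J ∈ {J | IsInitialSegment F J ∧ P ⊆ J}, W δ F J) := by
  have hzero (f : C(K, ℝ)) : IsClosed {t | f t = 0} := isClosed_eq f.continuous continuous_const
  have hlarge (f : C(K, ℝ)) : IsClosed {t | δ ≤ |f t|} :=
    isClosed_le continuous_const f.continuous.abs
  have hgap : IsClosed {t | ∀ f ∈ F, f t = 0 ∨ δ ≤ |f t|} := by
    simp only [ofPred_forall, ofPred_or]
    exact isClosed_biInter fun f _ => (hzero f).union (hlarge f)
  rw [iUnion_W_subset_eq hδ, iUnion_W_superset_eq δ hP.1]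
  constructor
  · have hout : IsClosed {t | ∀ f ∈ F \ P, δ ≤ |f t|} := by
      simp only [ofPred_forall]
      exact isClosed_biInter fun f _ => hlarge f
    exact (hgap.inter hout).isCompact
  · have hin : IsClosed {t | ∀ f ∈ P, f t = 0} := by
      simp only [ofPred_forall]
      exact isClosed_biInter fun f _ => hzero f
    exact (hgap.inter hin).isCompact
end

section
/- Neither the Stone–Čech compactification βℝ of the real line nor the remainder βℝ ∖ ℝ (which is a compact Hausdorff space, since ℝ is locally compact) has the Bishop property (B). -/
open Set Topology Filter

/-- An uncountable family, indexed by `ℝ` and increasing for `≺`, with mutual distances at least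
`1`, witnesses the failure of the Bishop property. -/
lemma not_hasBishop_of_family {K : Type*} [TopologicalSpace K] [CompactSpace K] [T2Space K]
    (F : ℝ → C(K, ℝ)) (hmul : ∀ r s, r < s → ∀ t, F r t * (F r t - F s t) = 0)
    (hpt : ∀ r s, r < s → ∃ t, F s t - F r t = 1) : ¬ HasBishop K := by
  have key : ∀ r s, r < s → PrecDelta 1 (F r) (F s) := by
    intro r s hrs
    obtain ⟨p, hp⟩ := hpt r s hrs
    refine ⟨⟨fun h => by simp [h] at hp, fun t ht => ?_⟩, ?_⟩
    · have hcl : IsClosed {t | F r t = F s t} :=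
        isClosed_eq (F r).continuous (F s).continuous
      refine closure_minimal (fun u hu => ?_) hcl ht
      exact sub_eq_zero.1 ((mul_eq_zero.1 (hmul r s hrs u)).resolve_left hu)
    · have h := (F r - F s).norm_coe_le_norm p
      rw [ContinuousMap.sub_apply, norm_sub_rev, hp, norm_one] at h
      exact h
  have hinj : Function.Injective F := by
    intro r s h
    rcases lt_trichotomy r s with hrs | hrs | hrs
    · exact ((key r s hrs).1.1 h).elim
    · exact hrs
    · exact ((key s r hrs).1.1 h.symm).elim
  intro hB
  have hc : (range F).Countable := by
    refine hB 1 one_pos _ ?_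
    rintro _ ⟨r, rfl⟩ _ ⟨s, rfl⟩ hne
    rcases lt_trichotomy r s with hrs | hrs | hrs
    · exact Or.inl (key r s hrs)
    · exact (hne (congrArg F hrs)).elim
    · exact Or.inr (key s r hrs)
  have hu : (univ : Set ℝ).Countable := by
    rw [← image_univ] at hc
    exact countable_of_injective_of_countable_image hinj.injOn hc
  exact Cardinal.not_countable_real hu

/-- A continuous function with values in `[0, 1]` extends continuously to the Stone–Čech
compactification. -/
lemma exists_stoneCech_extension {X : Type*} [TopologicalSpace X] {g : X → ℝ}
    (hg : Continuous g) (h01 : ∀ x, g x ∈ Icc (0 : ℝ) 1) :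
    ∃ G : C(StoneCech X, ℝ), ∀ x, G (stoneCechUnit x) = g x := by
  have hg' : Continuous (fun x => (⟨g x, h01 x⟩ : Icc (0 : ℝ) 1)) := hg.subtype_mk _
  refine ⟨⟨fun p => (stoneCechExtend hg' p).1,
    continuous_subtype_val.comp (continuous_stoneCechExtend hg')⟩, fun x => ?_⟩
  simp [stoneCechExtend_stoneCechUnit]

/-- The image in the Stone–Čech compactification of a compact neighbourhood is a neighbourhood. -/
lemma IsCompact.image_stoneCechUnit_mem_nhds {X : Type*} [TopologicalSpace X] [T35Space X]
    {x : X} {K : Set X} (hK : IsCompact K) (hx : K ∈ 𝓝 x) :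
    stoneCechUnit '' K ∈ 𝓝 (stoneCechUnit x) := by
  have h := isDenseEmbedding_stoneCechUnit.isDenseInducing.closure_image_mem_nhds hx
  rwa [(hK.image continuous_stoneCechUnit).isClosed.closure_eq] at h

/-- The canonical image of a locally compact space in its Stone–Čech compactification is open. -/
lemma isOpen_range_stoneCechUnit {X : Type*} [TopologicalSpace X] [T35Space X]
    [LocallyCompactSpace X] : IsOpen (range (stoneCechUnit : X → StoneCech X)) := by
  rw [isOpen_iff_mem_nhds]
  rintro _ ⟨x, rfl⟩
  obtain ⟨K, hK, hx⟩ := exists_compact_mem_nhds x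
  exact mem_of_superset (hK.image_stoneCechUnit_mem_nhds hx) (image_subset_range _ _)

/-- A map leaving every compact set has its cluster points in the remainder. -/
lemma exists_clusterPt_remainder {X ι : Type*} [TopologicalSpace X] [T35Space X]
    [LocallyCompactSpace X] {l : Filter ι} [l.NeBot] {u : ι → X} (hu : Tendsto u l (cocompact X)) :
    ∃ p ∈ (range (stoneCechUnit : X → StoneCech X))ᶜ,
      MapClusterPt p l (fun i => stoneCechUnit (u i)) := by
  obtain ⟨p, hp⟩ := exists_clusterPt_of_compactSpace (map (fun i => stoneCechUnit (u i)) l)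
  refine ⟨p, ?_, hp⟩
  rintro ⟨x, rfl⟩
  obtain ⟨K, hK, hx⟩ := exists_compact_mem_nhds x
  have hfreq := (mapClusterPt_iff_frequently.1 hp) _ (hK.image_stoneCechUnit_mem_nhds hx)
  obtain ⟨i, ⟨y, hy, hyi⟩, hi⟩ :=
    (hfreq.and_eventually (hu.eventually hK.compl_mem_cocompact)).exists
  rw [isEmbedding_stoneCechUnit.injective hyi] at hy
  exact hi hy

/-- The function equal to `|sin (π x)|` on the intervals `[n, n + 1)` with `n ∈ A` and to `0`
elsewhere. -/
noncomputable def bumps (A : Set ℤ) : ℝ → ℝ :=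
  indicator {x | ⌊x⌋ ∈ A} fun x => |Real.sin (Real.pi * x)|

lemma continuous_bumps (A : Set ℤ) : Continuous (bumps A) := by
  have hfl : Continuous fun x : ℝ => |Real.sin (Real.pi * x)| := by fun_prop
  refine continuous_indicator (fun x hx => ?_) hfl.continuousOn
  by_contra hne
  have hx' : x ≠ (⌊x⌋ : ℝ) := by
    intro h
    apply hne
    rw [h, mul_comm, Real.sin_int_mul_pi, abs_zero]
  have hnhds : ∀ᶠ y in 𝓝 x, ⌊y⌋ = ⌊x⌋ := by
    filter_upwards [Ioo_mem_nhds (lt_of_le_of_ne (Int.floor_le x) hx'.symm)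
      (Int.lt_floor_add_one x)] with y hy
    exact Int.floor_eq_iff.2 ⟨hy.1.le, hy.2⟩
  by_cases hA : ⌊x⌋ ∈ A
  · refine hx.2 (mem_interior_iff_mem_nhds.2 ?_)
    filter_upwards [hnhds] with y hy
    simpa [hy] using hA
  · obtain ⟨y, hyA, hy⟩ := ((mem_closure_iff_frequently.1 hx.1).and_eventually hnhds).exists
    exact hA (hy ▸ hyA)

lemma bumps_mem_Icc (A : Set ℤ) (x : ℝ) : bumps A x ∈ Icc (0 : ℝ) 1 := by
  by_cases h : ⌊x⌋ ∈ A
  · simp [bumps, indicator, h, Real.abs_sin_le_one]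
  · simp [bumps, indicator, h]

lemma bumps_mul_sub_eq_zero {A B : Set ℤ} (h : A ⊆ B) (x : ℝ) :
    bumps A x * (bumps A x - bumps B x) = 0 := by
  by_cases hA : ⌊x⌋ ∈ A
  · simp [bumps, indicator, hA, h hA]
  · simp [bumps, indicator, hA]

lemma floor_intCast_add_half (n : ℤ) : ⌊(n : ℝ) + 1 / 2⌋ = n := by
  rw [Int.floor_eq_iff]
  constructor <;> linarith

lemma bumps_intCast_add_half_of_mem {A : Set ℤ} {n : ℤ} (hn : n ∈ A) :
    bumps A (n + 1 / 2) = 1 := by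
  have hsin : |Real.sin (Real.pi * (n + 1 / 2))| = 1 := by
    have h : Real.pi * ((n : ℝ) + 1 / 2) = Real.pi / 2 + n * Real.pi := by ring
    rw [h, Real.sin_add_int_mul_pi, Real.sin_pi_div_two, mul_one, abs_zpow, abs_neg, abs_one,
      one_zpow]
  rw [bumps, indicator_of_mem _, hsin]
  rwa [mem_ofPred_eq, floor_intCast_add_half]

lemma bumps_intCast_add_half_of_notMem {A : Set ℤ} {n : ℤ} (hn : n ∉ A) :
    bumps A (n + 1 / 2) = 0 := by
  rw [bumps, indicator_of_notMem]
  rwa [mem_ofPred_eq, floor_intCast_add_half]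

/-- There is a chain of sets of integers, indexed by `ℝ`, with infinite successive differences. -/
lemma exists_real_chain_infinite_diff :
    ∃ A : ℝ → Set ℤ, ∀ r s, r < s → A r ⊆ A s ∧ (A s \ A r).Infinite := by
  let e : ℤ ≃ ℚ := Denumerable.equiv₂ ℤ ℚ
  refine ⟨fun r => {n | (e n : ℝ) < r}, fun r s hrs => ⟨fun n hn => lt_trans hn hrs, ?_⟩⟩
  obtain ⟨a, hra, has⟩ := exists_rat_btwn hrs
  obtain ⟨b, hab, hbs⟩ := exists_rat_btwn has
  have hinf : (e ⁻¹' Ioo a b).Infinite :=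
    (Ioo_infinite (Rat.cast_lt.1 hab)).preimage (by simp [e.surjective.range_eq])
  refine hinf.mono fun n hn => ⟨?_, ?_⟩
  · exact lt_trans (Rat.cast_lt.2 hn.2) hbs
  · exact not_lt.2 (hra.trans (Rat.cast_lt.2 hn.1)).le

/-- There is a real-indexed family on `βℝ`, increasing for `≺`, whose members are at distance `1`
already on the remainder. -/
lemma exists_stoneCech_real_family :
    ∃ F : ℝ → C(StoneCech ℝ, ℝ),
      (∀ r s, r < s → ∀ t, F r t * (F r t - F s t) = 0) ∧
      ∀ r s, r < s → ∃ t ∈ (range (stoneCechUnit : ℝ → StoneCech ℝ))ᶜ, F s t - F r t = 1 := by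
  obtain ⟨A, hA⟩ := exists_real_chain_infinite_diff
  choose F hF using fun r =>
    exists_stoneCech_extension (continuous_bumps (A r)) (bumps_mem_Icc (A r))
  refine ⟨F, fun r s hrs => ?_, fun r s hrs => ?_⟩
  · have hclosed : IsClosed {t | F r t * (F r t - F s t) = 0} :=
      isClosed_eq (by fun_prop) continuous_const
    intro t
    refine denseRange_stoneCechUnit.induction_on t hclosed fun x => ?_
    rw [hF, hF]
    exact bumps_mul_sub_eq_zero (hA r s hrs).1 x
  · have : (cofinite ⊓ 𝓟 (A s \ A r)).NeBot := (hA r s hrs).2.cofinite_inf_principal_neBot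
    have hu : Tendsto (fun n : ℤ => (n : ℝ) + 1 / 2) (cofinite ⊓ 𝓟 (A s \ A r)) (cocompact ℝ) :=
      ((Homeomorph.addRight (1 / 2 : ℝ)).isClosedEmbedding.tendsto_cocompact.comp
        Int.tendsto_coe_cofinite).mono_left inf_le_left
    obtain ⟨p, hp, hcl⟩ := exists_clusterPt_remainder hu
    refine ⟨p, hp, ?_⟩
    have hclosed : IsClosed {t | F s t - F r t = 1} :=
      isClosed_eq (by fun_prop) continuous_const
    refine hclosed.mem_of_mapClusterPt hcl ?_
    filter_upwards [mem_inf_of_right (mem_principal_self (A s \ A r))] with n hn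
    rw [hF, hF, bumps_intCast_add_half_of_mem hn.1,
      bumps_intCast_add_half_of_notMem hn.2, sub_zero]

/-- **Example 3.2.** Neither `βℝ` nor the remainder `βℝ ∖ ℝ` (which is compact,
`ℝ` being locally compact) has the Bishop property (B). -/
theorem stmt5 :
    ¬ HasBishop (StoneCech ℝ) ∧
    IsCompact ((Set.range (stoneCechUnit : ℝ → StoneCech ℝ))ᶜ) ∧
    ∀ (h : CompactSpace ↥(Set.range (stoneCechUnit : ℝ → StoneCech ℝ))ᶜ),
      ¬ @HasBishop ↥(Set.range (stoneCechUnit : ℝ → StoneCech ℝ))ᶜ _ h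
        inferInstance := by
  obtain ⟨F, hmul, hpt⟩ := exists_stoneCech_real_family
  refine ⟨not_hasBishop_of_family F hmul fun r s hrs => ?_,
    isOpen_range_stoneCechUnit.isClosed_compl.isCompact, fun h => ?_⟩
  · obtain ⟨t, -, ht⟩ := hpt r s hrs
    exact ⟨t, ht⟩
  · refine not_hasBishop_of_family (fun r => (F r).restrict _)
      (fun r s hrs t => hmul r s hrs t) fun r s hrs => ?_
    obtain ⟨t, ht, h1⟩ := hpt r s hrs
    exact ⟨⟨t, ht⟩, h1⟩
end

section
/- Let K be a compact Hausdorff space, M ⊆ K a closed subset, and δ > 0. Suppose f_n (n ∈ ℕ) and f in C(K) satisfy f_1 ≺ f_2 ≺ f_3 ≺ ⋯ ≺ f (that is, f_n ≺ f_{n+1} for all n and f_n ≺ f for all n), and suppose t_n ∈ M satisfy f_n(t_n) = 0 and |f_{n+1}(t_n)| ≥ δ for all n. Then no accumulation point u ∈ M of the sequence (t_n) has a local base of connected sets relative to M. -/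
open Set Topology Filter

/-- `t ∈ M` has a local base of connected sets relative to `M`: for every set `U`
open in `M` (with its subspace topology) containing `t`, there is a connected set `V`,
open in `M`, with `t ∈ V ⊆ U`. -/
def HasConnBase {K : Type*} [TopologicalSpace K] (M : Set K) (t : K) (ht : t ∈ M) : Prop :=
  ∀ U : Set ↥M, IsOpen U → (⟨t, ht⟩ : ↥M) ∈ U →
    ∃ V : Set ↥M, IsOpen V ∧ IsConnected V ∧ (⟨t, ht⟩ : ↥M) ∈ V ∧ V ⊆ U

theorem Prec.eq_of_ne_zero {K : Type*} [TopologicalSpace K] {f g : C(K, ℝ)} (h : Prec f g)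
    {x : K} (hx : f x ≠ 0) : f x = g x :=
  h.2 x (subset_closure hx)

/-- Along a `≺`-increasing sequence, a value that is nonzero never changes again. -/
theorem eq_of_prec_succ {K : Type*} [TopologicalSpace K] {f : ℕ → C(K, ℝ)}
    (h : ∀ n, Prec (f n) (f (n + 1))) {x : K} {n m : ℕ} (hnm : n ≤ m) (hx : f n x ≠ 0) :
    f m x = f n x := by
  induction m, hnm using Nat.le_induction with
  | base => rfl
  | succ m _ ih => rw [← (h m).eq_of_ne_zero (ih ▸ hx), ih]

/-- **Lemma 3.4.** Let `M ⊆ K` be closed and suppose `f₁ ≺ f₂ ≺ ⋯ ≺ f` in `C(K)` and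
`tₙ ∈ M` satisfy `fₙ(tₙ) = 0` and `|f_{n+1}(tₙ)| ≥ δ` for all `n`. Then no accumulation
point `u ∈ M` of the sequence `(tₙ)` has a local base of connected sets relative to `M`. -/
theorem stmt6 {K : Type*} [TopologicalSpace K] [CompactSpace K] [T2Space K]
    (M : Set K) (hM : IsClosed M) (δ : ℝ) (hδ : 0 < δ)
    (f : ℕ → C(K, ℝ)) (flim : C(K, ℝ))
    (hsucc : ∀ n, Prec (f n) (f (n + 1))) (htop : ∀ n, Prec (f n) flim)
    (t : ℕ → K) (htM : ∀ n, t n ∈ M)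
    (hzero : ∀ n, f n (t n) = 0) (hbig : ∀ n, δ ≤ |f (n + 1) (t n)|)
    (u : K) (hu : u ∈ M) (hacc : MapClusterPt u atTop t) :
    ¬ HasConnBase M u hu := by
  intro hbase
  have hlim : ∀ n, δ ≤ |flim (t n)| := fun n => by
    have hne : f (n + 1) (t n) ≠ 0 := abs_pos.1 (hδ.trans_le (hbig n))
    rw [← (htop (n + 1)).eq_of_ne_zero hne]
    exact hbig n
  have hulim : δ ≤ |flim u| := by
    have hclosed : IsClosed {x | δ ≤ |flim x|} :=
      isClosed_le continuous_const (map_continuous flim).abs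
    exact hclosed.mem_of_mapClusterPt hacc (Eventually.of_forall hlim)
  obtain ⟨V, hVo, hVc, huV, hVU⟩ := hbase {x | δ / 2 < |flim x|}
    (isOpen_lt continuous_const ((map_continuous flim).comp continuous_subtype_val).abs)
    (show δ / 2 < |flim u| by linarith)
  obtain ⟨W, hWo, rfl⟩ := isOpen_induced_iff.1 hVo
  have hfreq : ∃ᶠ n in atTop, t n ∈ W := hacc.frequently (hWo.mem_nhds huV)
  obtain ⟨n, -, hn⟩ := frequently_atTop.1 hfreq 0
  obtain ⟨m, hnm, hm⟩ := frequently_atTop.1 hfreq (n + 1)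
  have hmn : f m (t n) = f (n + 1) (t n) :=
    eq_of_prec_succ hsucc hnm (abs_pos.1 (hδ.trans_le (hbig n)))
  -- On the connected set, `|f m|` takes the values `0` and at least `δ`, hence also `δ / 2`.
  obtain ⟨x, hxV, hx⟩ := hVc.isPreconnected.intermediate_value
    (a := ⟨t m, htM m⟩) (b := ⟨t n, htM n⟩) hm hn
    (f := fun x : M => |f m x|)
    ((map_continuous (f m)).comp continuous_subtype_val).abs.continuousOn
    (show δ / 2 ∈ Icc |f m (t m)| |f m (t n)| by
      rw [hzero, hmn, abs_zero]
      exact ⟨by linarith, by linarith [hbig n]⟩)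
  have hxU : δ / 2 < |flim x| := hVU hxV
  simp only at hx
  rw [← (htop m).eq_of_ne_zero (abs_pos.1 (by linarith))] at hxU
  exact hxU.ne' hx
end

section
/- Let K be a compact Hausdorff space such that K = ⋃_{n=1}^∞ H_n, where each H_n is open in its closure cl(H_n) and every point of H_n has a local base of connected sets relative to cl(H_n). Then K has the Bishop property (B). -/
open Set Topology Filter

/-- An uncountable linear order contains a nonempty suborder in which every countable set is
strictly bounded above, or one in which every countable set is strictly bounded below, or a
nontrivial dense suborder. -/
theorem exists_countablyDirected_or_dense (ι : Type*) [LinearOrder ι] [Uncountable ι] :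
    (∃ S : Set ι, ∀ D : Set S, D.Countable → ∃ s, ∀ d ∈ D, d < s) ∨
    (∃ S : Set ι, ∀ D : Set S, D.Countable → ∃ s, ∀ d ∈ D, s < d) ∨
    ∃ S : Set ι, Nontrivial S ∧ DenselyOrdered S := by
  by_cases hup : ∃ x : ι, ¬ {y | x ≤ y ∧ (uIcc x y).Countable}.Countable
  · obtain ⟨x, hx⟩ := hup
    refine Or.inl ⟨{y | x ≤ y ∧ (uIcc x y).Countable}, fun D hD ↦ ?_⟩
    by_contra! hcon
    refine hx ((hD.biUnion fun d _ ↦ d.2.2).mono fun y hy ↦ ?_)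
    obtain ⟨d, hdD, hd⟩ := hcon ⟨y, hy⟩
    exact mem_biUnion hdD (Icc_subset_uIcc ⟨hy.1, hd⟩)
  by_cases hdown : ∃ x : ι, ¬ {y | y ≤ x ∧ (uIcc x y).Countable}.Countable
  · obtain ⟨x, hx⟩ := hdown
    refine Or.inr (Or.inl ⟨{y | y ≤ x ∧ (uIcc x y).Countable}, fun D hD ↦ ?_⟩)
    by_contra! hcon
    refine hx ((hD.biUnion fun d _ ↦ d.2.2).mono fun y hy ↦ ?_)
    obtain ⟨d, hdD, hd⟩ := hcon ⟨y, hy⟩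
    exact mem_biUnion hdD (Icc_subset_uIcc' ⟨hd, hy.1⟩)
  push Not at hup hdown
  have hclass (x : ι) : {y | (uIcc x y).Countable}.Countable := by
    refine ((hup x).union (hdown x)).mono fun y hy ↦ ?_
    rcases le_total x y with h | h
    · exact Or.inl ⟨h, hy⟩
    · exact Or.inr ⟨h, hy⟩
  let r : Setoid ι :=
    { r := fun x y ↦ (uIcc x y).Countable
      iseqv :=
        { refl := fun x ↦ by simp
          symm := fun {x y} h ↦ by rwa [uIcc_comm]
          trans := fun {x y z} h₁ h₂ ↦ (h₁.union h₂).mono uIcc_subset_uIcc_union_uIcc } }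
  let rep : ι → ι := fun x ↦ (Quotient.mk r x).out
  have hrep (x : ι) : (uIcc (rep x) x).Countable := Quotient.mk_out (s := r) x
  have hrep_eq {x y : ι} (h : (uIcc x y).Countable) : rep x = rep y :=
    congrArg Quotient.out (Quotient.sound (s := r) h)
  have hrep_rep (x : ι) : rep (rep x) = rep x := hrep_eq (hrep x)
  refine Or.inr (Or.inr ⟨range rep, ?_, ⟨?_⟩⟩)
  · obtain ⟨x⟩ : Nonempty ι := inferInstance
    obtain ⟨y, hy⟩ : ∃ y, ¬ (uIcc (rep x) y).Countable := by
      by_contra! h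
      exact not_countable_univ ((hclass (rep x)).mono fun y _ ↦ h y)
    refine ⟨⟨rep x, x, rfl⟩, ⟨rep y, y, rfl⟩, fun h ↦ hy ?_⟩
    rw [Subtype.mk.inj h]
    exact hrep y
  · rintro ⟨_, x, rfl⟩ ⟨_, y, rfl⟩ (hlt : rep x < rep y)
    have hunc : ¬ (Icc (rep x) (rep y)).Countable := fun h ↦ by
      rw [← uIcc_of_le hlt.le] at h
      have := hrep_eq h
      rw [hrep_rep, hrep_rep] at this
      exact hlt.ne this
    obtain ⟨z, hz, hzx, hzy⟩ : ∃ z ∈ Icc (rep x) (rep y),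
        ¬ (uIcc (rep x) z).Countable ∧ ¬ (uIcc (rep y) z).Countable := by
      by_contra! h
      refine hunc (((hclass (rep x)).union (hclass (rep y))).mono fun z hz ↦ ?_)
      by_cases h' : (uIcc (rep x) z).Countable
      · exact Or.inl h'
      · exact Or.inr (h z hz h')
    refine ⟨⟨rep z, z, rfl⟩, ?_, ?_⟩
    · by_contra hle
      refine hzx ((hrep z).mono (uIcc_subset_uIcc ?_ right_mem_uIcc))
      exact Icc_subset_uIcc ⟨not_lt.1 hle, hz.1⟩
    · by_contra hle
      refine hzy ((hrep z).mono (uIcc_subset_uIcc ?_ right_mem_uIcc))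
      exact Icc_subset_uIcc' ⟨hz.2, not_lt.1 hle⟩

/-- Iterating a shrinking step that preserves `p` and achieves `q n` at the `n`-th stage. -/
theorem exists_seq_shrinking {α : Type*} {p : Set α → Prop} {q : ℕ → Set α → Prop}
    {P₀ : Set α} (h₀ : p P₀) (step : ∀ n P, p P → ∃ P' ⊆ P, p P' ∧ q n P') :
    ∃ P : ℕ → Set α, ∀ n, p (P n) ∧ P (n + 1) ⊆ P n ∧ q n (P (n + 1)) := by
  choose! next hsub hp hq using step
  let P : ℕ → Set α := fun n ↦ Nat.rec P₀ next n
  have hP (n : ℕ) : p (P n) := by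
    induction n with
    | zero => exact h₀
    | succ n ih => exact hp n _ ih
  exact ⟨P, fun n ↦ ⟨hP n, hsub n _ (hP n), hq n _ (hP n)⟩⟩

/-- Two families of closed sets `A` (decreasing) and `B` (increasing) indexed by a linear order,
such that points of `H n` have neighbourhoods in the closure of `H n` which are not separated
by any pair `(A k, B k)`. -/
structure LocallyUnseparated {K ι : Type*} [TopologicalSpace K] [LinearOrder ι]
    (H : ℕ → Set K) (A B : ι → Set K) : Prop where
  closed_left : ∀ i, IsClosed (A i)
  closed_right : ∀ i, IsClosed (B i)
  antitone_left : Antitone A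
  monotone_right : Monotone B
  disjoint : ∀ i, Disjoint (A i) (B i)
  nonempty : ∀ i j, i < j → (A i ∩ B j).Nonempty
  local_unseparated : ∀ n, ∀ x ∈ H n, ∀ i j, x ∈ A i → x ∈ B j → ∃ O ∈ 𝓝[closure (H n)] x,
    ∀ y ∈ O, ∀ z ∈ O, ∀ k ∈ Icc i j, y ∈ A k → z ∉ B k

namespace LocallyUnseparated

variable {K ι : Type*} [TopologicalSpace K] [LinearOrder ι] {H : ℕ → Set K} {A B : ι → Set K}

theorem lt (h : LocallyUnseparated H A B) {x : K} {i j : ι} (hi : x ∈ A i) (hj : x ∈ B j) :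
    i < j :=
  lt_of_not_ge fun hji ↦ disjoint_left.1 (h.disjoint j) (h.antitone_left hji hi) hj

theorem restrict (h : LocallyUnseparated H A B) (S : Set ι) :
    LocallyUnseparated H (fun i : S ↦ A i) (fun i : S ↦ B i) where
  closed_left i := h.closed_left i
  closed_right i := h.closed_right i
  antitone_left _ _ hij := h.antitone_left hij
  monotone_right _ _ hij := h.monotone_right hij
  disjoint i := h.disjoint i
  nonempty i j hij := h.nonempty i j hij
  local_unseparated n x hx i j hi hj := by
    obtain ⟨O, hO, hO'⟩ := h.local_unseparated n x hx i j hi hj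
    exact ⟨O, hO, fun y hy z hz k hk ↦ hO' y hy z hz k hk⟩

theorem dual (h : LocallyUnseparated H A B) :
    LocallyUnseparated (ι := ιᵒᵈ) H (fun i ↦ B i.ofDual) (fun i ↦ A i.ofDual) where
  closed_left i := h.closed_right i.ofDual
  closed_right i := h.closed_left i.ofDual
  antitone_left _ _ hij := h.monotone_right hij
  monotone_right _ _ hij := h.antitone_left hij
  disjoint i := (h.disjoint i.ofDual).symm
  nonempty i j hij := by
    rw [inter_comm]
    exact h.nonempty j.ofDual i.ofDual hij
  local_unseparated n x hx i j hi hj := by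
    obtain ⟨O, hO, hO'⟩ := h.local_unseparated n x hx j.ofDual i.ofDual hj hi
    exact ⟨O, hO, fun y hy z hz k hk hyk hzk ↦ hO' z hz y hy k.ofDual ⟨hk.2, hk.1⟩ hzk hyk⟩

variable [CompactSpace K]

/-- A strictly increasing sequence of indices cannot be separated by points of a closed subset of
`closure (H n)` whose relevant part lies in `H n`. -/
theorem exists_eq_empty_of_strictMono (h : LocallyUnseparated H A B) {n : ℕ} {R : Set K}
    (hR : IsClosed R) (hRH : R ⊆ closure (H n)) {i j : ι} (hS : R ∩ A i ∩ B j ⊆ H n)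
    {c : ℕ → ι} (hc : StrictMono c) (hcij : ∀ k, c k ∈ Icc i j) :
    ∃ k, R ∩ A (c k) ∩ B (c (k + 1)) = ∅ := by
  by_contra! hne
  choose x hx using hne
  have hxS (k : ℕ) : x k ∈ R ∩ A i ∩ B j :=
    ⟨⟨(hx k).1.1, h.antitone_left (hcij k).1 (hx k).1.2⟩,
      h.monotone_right (hcij (k + 1)).2 (hx k).2⟩
  have hcomp : IsCompact (R ∩ A i ∩ B j) :=
    ((hR.inter (h.closed_left i)).inter (h.closed_right j)).isCompact
  obtain ⟨y, hyS, hy⟩ := hcomp.exists_mapClusterPt (f := atTop) (u := x)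
    (le_principal_iff.2 (mem_map.2 (univ_mem' hxS)))
  obtain ⟨O, hO, hO'⟩ := h.local_unseparated n y (hS hyS) i j hyS.1.2 hyS.2
  obtain ⟨W, hW, hWO⟩ := mem_nhdsWithin_iff_exists_mem_nhds_inter.1 hO
  have hfreq := mapClusterPt_iff_frequently.1 hy W hW
  have hxO (k : ℕ) (hk : x k ∈ W) : x k ∈ O := hWO ⟨hk, hRH (hx k).1.1⟩
  obtain ⟨k, -, hk⟩ := frequently_atTop.1 hfreq 0
  obtain ⟨l, hkl, hl⟩ := frequently_atTop.1 hfreq (k + 1)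
  exact hO' _ (hxO l hl) _ (hxO k hk) (c l) (hcij l) (hx l).1.2
    (h.monotone_right (hc.monotone hkl) (hx k).2)

theorem false_of_countablyDirected (h : LocallyUnseparated H A B) (hcover : (⋃ n, H n) = univ)
    (hopen : ∀ n, ∃ U : Set K, IsOpen U ∧ H n = U ∩ closure (H n))
    (hdir : ∀ D : Set ι, D.Countable → ∃ s, ∀ d ∈ D, d < s) : False := by
  let p : Set K → Prop := fun P ↦ IsClosed P ∧ ∀ i, ∃ j, (P ∩ A i ∩ B j).Nonempty
  have h₀ : p univ := by
    refine ⟨isClosed_univ, fun i ↦ ?_⟩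
    obtain ⟨s, hs⟩ := hdir {i} (countable_singleton i)
    exact ⟨s, by simpa using h.nonempty i s (hs i rfl)⟩
  have step (n : ℕ) (P : Set K) (hP : p P) :
      ∃ P' ⊆ P, p P' ∧ ∀ i j, P' ∩ H n ∩ A i ∩ B j = ∅ := by
    obtain ⟨U, hU, hHU⟩ := hopen n
    have hRc : IsClosed (P ∩ closure (H n)) := hP.1.inter isClosed_closure
    have hQc : IsClosed (P ∩ closure (H n) ∩ Uᶜ) := hRc.inter hU.isClosed_compl
    by_cases hQ : p (P ∩ closure (H n) ∩ Uᶜ)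
    · refine ⟨_, fun x hx ↦ hx.1.1, hQ, fun i j ↦ eq_empty_of_forall_notMem ?_⟩
      rintro x ⟨⟨⟨⟨-, hxU⟩, hxH⟩, -⟩, -⟩
      rw [hHU] at hxH
      exact hxU hxH.1
    by_cases hR : p (P ∩ closure (H n))
    · exfalso
      obtain ⟨a, ha⟩ : ∃ a, ∀ j, P ∩ closure (H n) ∩ Uᶜ ∩ A a ∩ B j = ∅ := by
        by_contra! hcon
        exact hQ ⟨hQc, hcon⟩
      choose next hnext using hR.2
      have hlt (i : ι) : i < next i := by
        obtain ⟨x, hx⟩ := hnext i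
        exact h.lt hx.1.2 hx.2
      let c : ℕ → ι := fun k ↦ next^[k] a
      have hc_succ (k : ℕ) : c (k + 1) = next (c k) := Function.iterate_succ_apply' next k a
      have hc : StrictMono c := strictMono_nat_of_lt_succ fun k ↦ by
        rw [hc_succ]
        exact hlt _
      obtain ⟨s, hs⟩ := hdir (range c) (countable_range c)
      obtain ⟨k, hk⟩ := h.exists_eq_empty_of_strictMono (n := n) hRc inter_subset_right
        (i := a) (j := s) (fun x hx ↦ by
          by_contra hxH
          rw [hHU] at hxH
          have hx' : x ∈ P ∩ closure (H n) ∩ Uᶜ ∩ A a ∩ B s :=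
            ⟨⟨⟨hx.1.1, fun hxU ↦ hxH ⟨hxU, hx.1.1.2⟩⟩, hx.1.2⟩, hx.2⟩
          rw [ha s] at hx'
          exact hx') hc
        fun k ↦ ⟨hc.monotone (Nat.zero_le k), (hs _ (mem_range_self k)).le⟩
      rw [hc_succ] at hk
      exact (hnext (c k)).ne_empty hk
    · obtain ⟨a, ha⟩ : ∃ a, ∀ j, P ∩ closure (H n) ∩ A a ∩ B j = ∅ := by
        by_contra! hcon
        exact hR ⟨hRc, hcon⟩
      refine ⟨P ∩ A a, inter_subset_left, ⟨hP.1.inter (h.closed_left a), fun i ↦ ?_⟩,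
        fun i j ↦ eq_empty_of_forall_notMem ?_⟩
      · obtain ⟨j, x, hx⟩ := hP.2 (max i a)
        exact ⟨j, x, ⟨⟨hx.1.1, h.antitone_left (le_max_right i a) hx.1.2⟩,
          h.antitone_left (le_max_left i a) hx.1.2⟩, hx.2⟩
      · rintro x ⟨⟨⟨⟨hxP, hxa⟩, hxH⟩, -⟩, hxj⟩
        have hx' : x ∈ P ∩ closure (H n) ∩ A a ∩ B j :=
          ⟨⟨⟨hxP, subset_closure hxH⟩, hxa⟩, hxj⟩
        rw [ha j] at hx'
        exact hx'
  obtain ⟨P, hP⟩ := exists_seq_shrinking h₀ step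
  obtain ⟨a, -⟩ := hdir ∅ countable_empty
  choose b hb using fun n ↦ (hP n).1.2 a
  obtain ⟨s, hs⟩ := hdir (range b) (countable_range b)
  have hclosed (n : ℕ) : IsClosed (P n ∩ A a ∩ B s) :=
    ((hP n).1.1.inter (h.closed_left a)).inter (h.closed_right s)
  obtain ⟨x, hx⟩ := IsCompact.nonempty_iInter_of_sequence_nonempty_isCompact_isClosed
    (fun n ↦ P n ∩ A a ∩ B s)
    (fun n x hx ↦ ⟨⟨(hP n).2.1 hx.1.1, hx.1.2⟩, hx.2⟩)
    (fun n ↦ (hb n).imp fun x hx ↦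
      ⟨hx.1, h.monotone_right (hs _ (mem_range_self n)).le hx.2⟩)
    (hclosed 0).isCompact hclosed
  rw [mem_iInter] at hx
  obtain ⟨n, hn⟩ := mem_iUnion.1 (hcover.symm ▸ mem_univ x : x ∈ ⋃ n, H n)
  have hx' : x ∈ P (n + 1) ∩ H n ∩ A a ∩ B s :=
    ⟨⟨⟨(hx (n + 1)).1.1, hn⟩, (hx 0).1.2⟩, (hx 0).2⟩
  rw [(hP n).2.2] at hx'
  exact hx'

theorem false_of_denselyOrdered [DenselyOrdered ι] [Nontrivial ι] (h : LocallyUnseparated H A B)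
    (hcover : (⋃ n, H n) = univ)
    (hopen : ∀ n, ∃ U : Set K, IsOpen U ∧ H n = U ∩ closure (H n)) : False := by
  let p : Set K → Prop := fun P ↦ IsClosed P ∧
    ∃ a b, a < b ∧ ∀ i j, a ≤ i → i < j → j ≤ b → (P ∩ A i ∩ B j).Nonempty
  have h₀ : p univ := by
    obtain ⟨a, b, hab⟩ := exists_pair_lt ι
    exact ⟨isClosed_univ, a, b, hab, fun i j _ hij _ ↦ by simpa using h.nonempty i j hij⟩
  have step (n : ℕ) (P : Set K) (hP : p P) : ∃ P' ⊆ P, p P' ∧ P' ∩ H n = ∅ := by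
    obtain ⟨hPc, a, b, hab, hPab⟩ := hP
    obtain ⟨U, hU, hHU⟩ := hopen n
    have hRc : IsClosed (P ∩ closure (H n)) := hPc.inter isClosed_closure
    have hQc : IsClosed (P ∩ closure (H n) ∩ Uᶜ) := hRc.inter hU.isClosed_compl
    by_cases hQ : ∀ i j, a ≤ i → i < j → j ≤ b →
        (P ∩ closure (H n) ∩ Uᶜ ∩ A i ∩ B j).Nonempty
    · refine ⟨_, fun x hx ↦ hx.1.1, ⟨hQc, a, b, hab, hQ⟩, eq_empty_of_forall_notMem ?_⟩
      rintro x ⟨⟨-, hxU⟩, hxH⟩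
      rw [hHU] at hxH
      exact hxU hxH.1
    push Not at hQ
    obtain ⟨i, j, hai, hij, hjb, hQij⟩ := hQ
    have : Nonempty (Ico i j) := ⟨⟨i, le_rfl, hij⟩⟩
    obtain ⟨c, hc⟩ := Nat.exists_strictMono (Ico i j)
    obtain ⟨k, hk⟩ := h.exists_eq_empty_of_strictMono (n := n) hRc inter_subset_right
      (i := i) (j := j) (c := fun k ↦ c k) (fun x hx ↦ by
        by_contra hxH
        rw [hHU] at hxH
        have hx' : x ∈ P ∩ closure (H n) ∩ Uᶜ ∩ A i ∩ B j :=
          ⟨⟨⟨hx.1.1, fun hxU ↦ hxH ⟨hxU, hx.1.1.2⟩⟩, hx.1.2⟩, hx.2⟩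
        rw [hQij] at hx'
        exact hx') (fun k l hkl ↦ hc hkl)
      fun k ↦ ⟨(c k).2.1, (c k).2.2.le⟩
    refine ⟨P ∩ A (c k) ∩ B (c (k + 1)), fun x hx ↦ hx.1.1,
      ⟨(hPc.inter (h.closed_left _)).inter (h.closed_right _), c k, c (k + 1),
        hc (Nat.lt_succ_self k), fun i' j' hi' hij' hj' ↦ ?_⟩, eq_empty_of_forall_notMem ?_⟩
    · obtain ⟨x, hx⟩ := hPab i' j' ((hai.trans (c k).2.1).trans hi') hij'
        ((hj'.trans (c (k + 1)).2.2.le).trans hjb)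
      exact ⟨x, ⟨⟨⟨hx.1.1, h.antitone_left hi' hx.1.2⟩, h.monotone_right hj' hx.2⟩, hx.1.2⟩,
        hx.2⟩
    · rintro x ⟨⟨⟨hxP, hxA⟩, hxB⟩, hxH⟩
      have hx' : x ∈ P ∩ closure (H n) ∩ A (c k) ∩ B (c (k + 1)) :=
        ⟨⟨⟨hxP, subset_closure hxH⟩, hxA⟩, hxB⟩
      rw [hk] at hx'
      exact hx'
  obtain ⟨P, hP⟩ := exists_seq_shrinking h₀ step
  obtain ⟨x, hx⟩ := IsCompact.nonempty_iInter_of_sequence_nonempty_isCompact_isClosed P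
    (fun n ↦ (hP n).2.1)
    (fun n ↦ by
      obtain ⟨-, a, b, hab, hne⟩ := (hP n).1
      exact (hne a b le_rfl hab le_rfl).mono fun x hx ↦ hx.1.1)
    (hP 0).1.1.isCompact fun n ↦ (hP n).1.1
  rw [mem_iInter] at hx
  obtain ⟨n, hn⟩ := mem_iUnion.1 (hcover.symm ▸ mem_univ x : x ∈ ⋃ n, H n)
  have hx' : x ∈ P (n + 1) ∩ H n := ⟨hx (n + 1), hn⟩
  rw [(hP n).2.2] at hx'
  exact hx'

theorem countable (h : LocallyUnseparated H A B) (hcover : (⋃ n, H n) = univ)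
    (hopen : ∀ n, ∃ U : Set K, IsOpen U ∧ H n = U ∩ closure (H n)) : Countable ι := by
  by_contra hι
  rw [not_countable_iff] at hι
  rcases exists_countablyDirected_or_dense ι with ⟨S, hS⟩ | ⟨S, hS⟩ | ⟨S, hS, hS'⟩
  · exact (h.restrict S).false_of_countablyDirected hcover hopen hS
  · exact (h.restrict S).dual.false_of_countablyDirected hcover hopen hS
  · exact (h.restrict S).false_of_denselyOrdered hcover hopen

end LocallyUnseparated

namespace Prec

variable {K : Type*} [TopologicalSpace K] {f g h : C(K, ℝ)}

theorem eq_of_ne_zero_s9 (hfg : Prec f g) {x : K} (hx : f x ≠ 0) : f x = g x :=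
  hfg.2 x (subset_closure hx)

theorem eq_zero_of_eq_zero (hfg : Prec f g) {x : K} (hx : g x = 0) : f x = 0 := by
  by_contra hne
  exact hne ((hfg.eq_of_ne_zero_s9 hne).trans hx)

theorem asymm (hfg : Prec f g) : ¬ Prec g f := fun hgf ↦ hfg.1 <| by
  ext x
  by_cases hx : f x = 0
  · rw [hx, hgf.eq_zero_of_eq_zero hx]
  · exact hfg.eq_of_ne_zero_s9 hx

theorem trans (hfg : Prec f g) (hgh : Prec g h) : Prec f h := by
  refine ⟨?_, fun x hx ↦ ?_⟩
  · rintro rfl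
    exact hfg.asymm hgh
  · refine (hfg.2 x hx).trans (hgh.2 x (closure_mono (fun y hy ↦ ?_) hx))
    exact fun hy' ↦ hy (hfg.eq_zero_of_eq_zero hy')

/-- If `f ≺ g` and `g` has no zero on a preconnected set, then `f` either vanishes nowhere or
everywhere on it. -/
theorem eq_zero_of_isPreconnected (hfg : Prec f g) {V : Set K} (hV : IsPreconnected V)
    (hg : ∀ x ∈ V, g x ≠ 0) {x y : K} (hx : x ∈ V) (hy : y ∈ V) (hfx : f x = 0) : f y = 0 := by
  by_contra hfy
  have hopen : IsOpen {t | f t ≠ 0} := isOpen_ne_fun f.continuous continuous_const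
  have hcl (z : K) (hz : z ∈ V) (hz' : z ∈ closure {t | f t ≠ 0}) : f z ≠ 0 := by
    rw [hfg.2 z hz']
    exact hg z hz
  obtain ⟨z, -, hz, hz'⟩ := hV {t | f t ≠ 0} (closure {t | f t ≠ 0})ᶜ hopen
    isClosed_closure.isOpen_compl
    (fun z hz ↦ by
      by_cases hz' : z ∈ closure {t | f t ≠ 0}
      · exact Or.inl (hcl z hz hz')
      · exact Or.inr hz')
    ⟨y, hy, hfy⟩ ⟨x, hx, fun hx' ↦ hcl x hx hx' hfx⟩
  exact hz' (subset_closure hz)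

end Prec

/-- The linear order on a `δ`-`≺`-chain whose strict part is `≺`. -/
noncomputable abbrev IsPrecChain.linearOrder {K : Type*} [TopologicalSpace K] [CompactSpace K]
    {δ : ℝ} {F : Set C(K, ℝ)} (hF : IsPrecChain δ F) : LinearOrder F where
  le f g := f = g ∨ Prec f.1 g.1
  lt f g := Prec f.1 g.1
  le_refl f := Or.inl rfl
  le_trans f g h hfg hgh := by
    rcases hfg with rfl | hfg
    · exact hgh
    rcases hgh with rfl | hgh
    · exact Or.inr hfg
    · exact Or.inr (hfg.trans hgh)
  le_antisymm f g hfg hgf := by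
    rcases hfg with rfl | hfg
    · rfl
    rcases hgf with rfl | hgf
    · rfl
    · exact (hfg.asymm hgf).elim
  lt_iff_le_not_ge f g := by
    refine ⟨fun hfg ↦ ⟨Or.inr hfg, ?_⟩, ?_⟩
    · rintro (rfl | hgf)
      · exact hfg.1 rfl
      · exact hfg.asymm hgf
    · rintro ⟨rfl | hfg, hgf⟩
      · exact (hgf (Or.inl rfl)).elim
      · exact hfg
  le_total f g := by
    by_cases hfg : f = g
    · exact Or.inl (Or.inl hfg)
    rcases hF f f.2 g g.2 (fun h ↦ hfg (Subtype.ext h)) with h | h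
    · exact Or.inl (Or.inr h.1)
    · exact Or.inr (Or.inr h.1)
  toDecidableLE := Classical.decRel _

theorem IsPrecChain.locallyUnseparated {K : Type*} [TopologicalSpace K] [CompactSpace K]
    {δ : ℝ} (hδ : 0 < δ) {F : Set C(K, ℝ)} (hF : IsPrecChain δ F) {H : ℕ → Set K}
    (hconn : ∀ n, ∀ t, ∀ ht : t ∈ H n, HasConnBase (closure (H n)) t (subset_closure ht)) :
    letI := hF.linearOrder
    LocallyUnseparated H (fun f : F ↦ {x | f.1 x = 0}) (fun f : F ↦ {x | δ ≤ |f.1 x|}) := by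
  let := hF.linearOrder
  have hne_zero {f : C(K, ℝ)} {x : K} (hx : δ ≤ |f x|) : f x ≠ 0 :=
    abs_pos.1 (hδ.trans_le hx)
  refine ⟨fun f ↦ isClosed_eq f.1.continuous continuous_const,
    fun f ↦ isClosed_le continuous_const f.1.continuous.abs, ?_, ?_,
    fun f ↦ disjoint_left.2 fun x hx hx' ↦ hne_zero hx' hx, ?_, ?_⟩
  · rintro f g (rfl | hfg) x hx
    · exact hx
    · exact hfg.eq_zero_of_eq_zero hx
  · rintro f g (rfl | hfg) x (hx : δ ≤ |f.1 x|)
    · exact hx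
    · change δ ≤ |g.1 x|
      rwa [← hfg.eq_of_ne_zero_s9 (hne_zero hx)]
  · intro f g (hfg : Prec f.1 g.1)
    have hnorm : δ ≤ ‖f.1 - g.1‖ := by
      rcases hF f f.2 g g.2 hfg.1 with h | h
      · exact h.2
      · exact (hfg.asymm h.1).elim
    obtain ⟨x, hx⟩ : ∃ x, δ ≤ ‖(f.1 - g.1) x‖ := by
      by_contra! hlt
      exact hnorm.not_gt ((ContinuousMap.norm_lt_iff _ hδ).2 hlt)
    have hfx : f.1 x = 0 := by
      by_contra hne
      rw [ContinuousMap.sub_apply, hfg.eq_of_ne_zero_s9 hne, sub_self, norm_zero] at hx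
      exact hx.not_gt hδ
    refine ⟨x, hfx, ?_⟩
    simpa [hfx] using hx
  · intro n x hx f g hfx hgx
    obtain ⟨V, hVo, hVc, hxV, hV⟩ := hconn n x hx {y | g.1 y.1 ≠ 0}
      (isOpen_ne_fun (g.1.continuous.comp continuous_subtype_val) continuous_const)
      (hne_zero hgx)
    have hpre : IsPreconnected (Subtype.val '' V) :=
      hVc.isPreconnected.image _ continuous_subtype_val.continuousOn
    have hg : ∀ y ∈ Subtype.val '' V, g.1 y ≠ 0 := by
      rintro _ ⟨y, hy, rfl⟩
      exact hV hy
    refine ⟨Subtype.val '' V, ?_, fun y hy z hz k hk hky hkz ↦ ?_⟩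
    · rw [← map_nhds_subtype_val ⟨x, subset_closure hx⟩]
      exact image_mem_map (hVo.mem_nhds hxV)
    · rcases hk.2 with rfl | hkg
      · exact hg y hy hky
      · exact hne_zero hkz (hkg.eq_zero_of_isPreconnected hpre hg hy hz hky)

/-- **Theorem 3.6 (3).** If `K = ⋃ₙ Hₙ` where each `Hₙ` is open in its closure and
every point of `Hₙ` has a local base of connected sets relative to `cl(Hₙ)`, then `K`
has the Bishop property (B). -/
theorem stmt9 {K : Type*} [TopologicalSpace K] [CompactSpace K] [T2Space K]
    (H : ℕ → Set K) (hcover : (⋃ n, H n) = univ)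
    (hopen : ∀ n, ∃ U : Set K, IsOpen U ∧ H n = U ∩ closure (H n))
    (hconn : ∀ n, ∀ t, ∀ ht : t ∈ H n, HasConnBase (closure (H n)) t (subset_closure ht)) :
    HasBishop K := by
  intro δ hδ F hF
  let := hF.linearOrder
  exact countable_coe_iff.1 ((hF.locallyUnseparated hδ hconn).countable hcover hopen)
end
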